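/- Let R = k[x_1,...,x_n] with n odd, m = (n−1)/2, and let M be a finite length graded R-module that is Gorenstein, i.e., admits τ: M ≅ Hom_k(M,k)(−s) with τ*(−s) = ±τ. Define β_{m+1}: A_{m+1}(M) → Hom_R(A_m(M), R⊗Λ^n W)(−s) by β(r⊗w⊗m)(r'⊗w'⊗m') = (r'r)⊗(w'∧w)·τ(m)(m'). Then the diagram with φ_{m+1}: A_{m+1}(M) → A_m(M) (Nielsen differential) and its dual satisfies φ^∨_{m+1} ∘ β_{m+1} = (−1)^m β_m ∘ φ_{m+1}, and consequently the middle map φ_{m+1} ∘ β_{m+1}^{−1} is symmetric if m is even and skew-symmetric if m is odd (with respect to dual bases, up to the sign ±). -/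

import Mathlib

/-!
Contraction `x_l ⌟ ·` is an antiderivation of `Λ W`, so applying it to a product `w'' ∧ w` of total
degree larger than `n`, which vanishes, moves `x_l` from one factor to the other up to sign. Since
multiplication by `x_l` also moves across the balanced pairing `b`, the differential `φ` is its own
adjoint under `β` up to sign. Graded commutativity of `Λ W` and the symmetry of `b` make `β` itself
symmetric up to sign, and exchanging the two arguments turns adjointness into the symmetry of the
middle map.
-/

open MvPolynomial TensorProduct

noncomputable section

set_option synthInstance.maxHeartbeats 400000

variable {k : Type*} [Field k] {n : ℕ}

variable (k n) in
/-- The exterior algebra `Λ W` on the `n`-dimensional space `W` dual to the span of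
the variables. -/
abbrev Lam : Type _ := ExteriorAlgebra k (Fin n → k)

variable (k n) in
/-- The `i`-th exterior power `Λ^i W`, as a submodule of the exterior algebra. -/
def lamPow (i : ℕ) : Submodule k (Lam k n) :=
  LinearMap.range (ExteriorAlgebra.ι k (M := Fin n → k)) ^ i

/-- Contraction by the functional `x_l`. -/
def contr (l : Fin n) : Lam k n →ₗ[k] Lam k n :=
  CliffordAlgebra.contractLeft (Q := (0 : QuadraticForm k (Fin n → k)))
    (LinearMap.proj l)

variable (k n) in
/-- The algebra `S = R ⊗_k Λ W`. -/
abbrev S : Type _ := MvPolynomial (Fin n) k ⊗[k] Lam k n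

/-- Multiplication by `x_l` on an `R`-module `M`, as a `k`-linear map. -/
def smulX (M : Type*) [AddCommGroup M] [Module k M]
    [Module (MvPolynomial (Fin n) k) M]
    [IsScalarTower k (MvPolynomial (Fin n) k) M] (l : Fin n) : M →ₗ[k] M where
  toFun m := (X l : MvPolynomial (Fin n) k) • m
  map_add' := smul_add _
  map_smul' c m := by
    show (X l : MvPolynomial (Fin n) k) • c • m = c • (X l : MvPolynomial (Fin n) k) • m
    rw [smul_comm]

variable (M : Type*) [AddCommGroup M] [Module k M]
  [Module (MvPolynomial (Fin n) k) M] [IsScalarTower k (MvPolynomial (Fin n) k) M]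

/-- Nielsen's differential `φ` on the total module `A(M) = (R ⊗ Λ W) ⊗ M`:
`(r ⊗ w) ⊗ m ↦ Σ_l ((x_l r) ⊗ (x_l ⌟ w)) ⊗ m − Σ_l (r ⊗ (x_l ⌟ w)) ⊗ (x_l m)`. -/
def nphiA : (S k n ⊗[k] M) →ₗ[k] (S k n ⊗[k] M) :=
  (∑ l : Fin n,
    TensorProduct.map
      (TensorProduct.map (LinearMap.mulLeft k (X l : MvPolynomial (Fin n) k)) (contr l))
      (LinearMap.id (R := k) (M := M)))

/-- The second summand of Nielsen's differential (with its sign). -/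
def nphiB : (S k n ⊗[k] M) →ₗ[k] (S k n ⊗[k] M) :=
  (∑ l : Fin n,
    TensorProduct.map
      (TensorProduct.map (LinearMap.id (R := k) (M := MvPolynomial (Fin n) k)) (contr l))
      (-(smulX M l)))

/-- Nielsen's differential `φ = φ_{•,0} + φ_{•,1}`. -/
def nphi : (S k n ⊗[k] M) →ₗ[k] (S k n ⊗[k] M) :=
  nphiA (k := k) (n := n) M + nphiB (k := k) (n := n) M

/-- The pairing `β` defined by a bilinear form `b` on `M`:
`β((s ⊗ m))((s' ⊗ m')) = b(m)(m') • (s' * s)` with values in `S = R ⊗ Λ W`. -/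
def nbeta (b : M →ₗ[k] M →ₗ[k] k) :
    (S k n ⊗[k] M) →ₗ[k] (S k n ⊗[k] M) →ₗ[k] S k n :=
  TensorProduct.curry
    ((TensorProduct.rid k (S k n)).toLinearMap ∘ₗ
      TensorProduct.map (TensorProduct.lift ((LinearMap.mul k (S k n)).flip))
        (TensorProduct.lift b) ∘ₗ
      (TensorProduct.tensorTensorTensorComm k (S k n) M (S k n) M).toLinearMap)

section CliffordAlgebra

open CliffordAlgebra

variable {R V : Type*} [CommRing R] [AddCommGroup V] [Module R V] {Q : QuadraticForm R V}

theorem contractLeft_mul (d : Module.Dual R V) (x y : CliffordAlgebra Q) :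
    contractLeft d (x * y) = contractLeft d x * y + involute x * contractLeft d y := by
  induction x using CliffordAlgebra.left_induction with
  | algebraMap c => simp [contractLeft_algebraMap_mul, contractLeft_algebraMap]
  | add x₁ x₂ h₁ h₂ => simp only [add_mul, map_add, h₁, h₂]; abel
  | ι_mul x v h =>
    simp only [mul_assoc, contractLeft_ι_mul, h, map_mul, involute_ι, mul_add, sub_mul,
      smul_mul_assoc, neg_mul]
    abel

theorem involute_eq_smul_of_mem_ι_range_pow {i : ℕ} {x : CliffordAlgebra Q}
    (hx : x ∈ LinearMap.range (ι Q) ^ i) : involute x = (-1 : R) ^ i • x := by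
  induction hx using Submodule.pow_induction_on_left' with
  | algebraMap c => simp
  | add x y i _ _ hx hy => rw [map_add, hx, hy, smul_add]
  | mem_mul v hv i x _ hx =>
    obtain ⟨v, rfl⟩ := hv
    simp [hx, pow_succ]

theorem contractLeft_mem_ι_range_pow (d : Module.Dual R V) {i : ℕ} {x : CliffordAlgebra Q}
    (hx : x ∈ LinearMap.range (ι Q) ^ (i + 1)) : contractLeft d x ∈ LinearMap.range (ι Q) ^ i := by
  induction i generalizing x with
  | zero =>
    obtain ⟨v, rfl⟩ : x ∈ LinearMap.range (ι Q) := by simpa using hx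
    rw [contractLeft_ι, pow_zero]
    exact Submodule.algebraMap_mem _
  | succ i ih =>
    rw [pow_succ'] at hx
    induction hx using Submodule.mul_induction_on' with
    | mem_mul_mem v hv y hy =>
      obtain ⟨v, rfl⟩ := hv
      rw [contractLeft_ι_mul, pow_succ']
      refine sub_mem (Submodule.smul_mem _ _ ?_) (Submodule.mul_mem_mul ⟨v, rfl⟩ (ih hy))
      rwa [← pow_succ']
    | add x _ y _ hx hy => rw [map_add]; exact add_mem hx hy

end CliffordAlgebra

section ExteriorAlgebra

open ExteriorAlgebra

variable {R V : Type*} [CommRing R] [AddCommGroup V] [Module R V]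

theorem ι_mul_eq_involute_mul_ι (v : V) (x : ExteriorAlgebra R V) :
    ι R v * x = CliffordAlgebra.involute x * ι R v := by
  induction x using CliffordAlgebra.left_induction with
  | algebraMap c => rw [AlgHom.commutes, Algebra.commutes]
  | add x y hx hy => rw [mul_add, hx, hy, map_add, add_mul]
  | ι_mul x u hx =>
    have hswap : ι R v * CliffordAlgebra.ι 0 u = -(CliffordAlgebra.ι 0 u * ι R v) :=
      eq_neg_of_add_eq_zero_left (ι_add_mul_swap v u)
    rw [map_mul, CliffordAlgebra.involute_ι, ← mul_assoc, hswap, neg_mul, mul_assoc, hx, neg_mul,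
      neg_mul, mul_assoc]

theorem exteriorPower_graded_mul_comm {i j : ℕ} {x y : ExteriorAlgebra R V}
    (hx : x ∈ ⋀[R]^i V) (hy : y ∈ ⋀[R]^j V) : x * y = (-1 : R) ^ (i * j) • (y * x) := by
  induction hx using Submodule.pow_induction_on_left' with
  | algebraMap c => rw [Algebra.commutes]; simp
  | add x₁ x₂ i _ _ h₁ h₂ => rw [add_mul, mul_add, smul_add, h₁, h₂]
  | mem_mul v hv i x _ h =>
    obtain ⟨v, rfl⟩ := hv
    have hvy : ι R v * y = (-1 : R) ^ j • (y * ι R v) := by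
      rw [ι_mul_eq_involute_mul_ι, involute_eq_smul_of_mem_ι_range_pow hy]
      exact smul_mul_assoc _ _ _
    rw [mul_assoc, h, mul_smul_comm, ← mul_assoc, hvy, smul_mul_assoc, smul_smul, mul_assoc,
      ← pow_add, Nat.succ_mul]

theorem exteriorPower_eq_bot_of_finrank_lt [Module.Free R V] [Module.Finite R V] {i : ℕ}
    (hi : Module.finrank R V < i) : ⋀[R]^i V = ⊥ := by
  nontriviality R
  have hrank : Module.finrank R (⋀[R]^i V) = 0 := by
    rw [exteriorPower.finrank_eq, Nat.choose_eq_zero_of_lt hi]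
  rw [← Submodule.subsingleton_iff_eq_bot]
  exact (Module.finrank_eq_zero_iff_of_free R _).mp hrank

theorem contractLeft_mul_eq_smul_mul_contractLeft [Module.Free R V] [Module.Finite R V]
    (d : Module.Dual R V) {i j : ℕ} (hij : Module.finrank R V ≤ i + j) {x y : ExteriorAlgebra R V}
    (hx : x ∈ ⋀[R]^(i + 1) V) (hy : y ∈ ⋀[R]^j V) :
    CliffordAlgebra.contractLeft d x * y =
      (-1 : R) ^ i • (x * CliffordAlgebra.contractLeft d y) := by
  have hxy : x * y = 0 := by
    rw [← Submodule.mem_bot R, ← exteriorPower_eq_bot_of_finrank_lt (i := i + 1 + j) (by omega)]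
    exact SetLike.GradedMul.mul_mem hx hy
  have hleibniz := contractLeft_mul d x y
  rw [hxy, map_zero, involute_eq_smul_of_mem_ι_range_pow hx, smul_mul_assoc, pow_succ, mul_neg_one,
    neg_smul] at hleibniz
  exact add_neg_eq_zero.mp hleibniz.symm

end ExteriorAlgebra

section NielsenModule

variable (k n) in
/-- The degree `i` term `A_i(N) = R ⊗ Λ^i W ⊗ N` of the Nielsen complex, realised as its image in
the total module `(R ⊗ Λ W) ⊗ N`. -/
def nielsenModule (N : Type*) [AddCommGroup N] [Module k N] (i : ℕ) :
    Submodule k (S k n ⊗[k] N) :=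
  Submodule.span k {t | ∃ (r : MvPolynomial (Fin n) k) (w : Lam k n) (a : N),
    w ∈ lamPow k n i ∧ t = (r ⊗ₜ[k] w) ⊗ₜ[k] a}

variable {N P : Type*} [AddCommGroup N] [Module k N] [AddCommGroup P] [Module k P]

theorem tmul_mem_nielsenModule {i : ℕ} (r : MvPolynomial (Fin n) k) {w : Lam k n}
    (hw : w ∈ lamPow k n i) (a : N) : (r ⊗ₜ[k] w) ⊗ₜ[k] a ∈ nielsenModule k n N i :=
  Submodule.subset_span ⟨r, w, a, hw, rfl⟩

theorem eqOn_nielsenModule₂ {f g : (S k n ⊗[k] N) →ₗ[k] (S k n ⊗[k] N) →ₗ[k] P} {i j : ℕ}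
    (hfg : ∀ (r r' : MvPolynomial (Fin n) k) (w w' : Lam k n) (a a' : N),
      w ∈ lamPow k n i → w' ∈ lamPow k n j →
        f ((r ⊗ₜ[k] w) ⊗ₜ[k] a) ((r' ⊗ₜ[k] w') ⊗ₜ[k] a') =
          g ((r ⊗ₜ[k] w) ⊗ₜ[k] a) ((r' ⊗ₜ[k] w') ⊗ₜ[k] a'))
    {t t' : S k n ⊗[k] N} (ht : t ∈ nielsenModule k n N i) (ht' : t' ∈ nielsenModule k n N j) :
    f t t' = g t t' := by
  have hsub : (f - g) t t' ∈ (⊥ : Submodule k P) := by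
    refine LinearMap.BilinMap.apply_apply_mem_of_mem_span ⊥ _ _ (f - g) ?_ t t' ht ht'
    rintro _ ⟨r, w, a, hw, rfl⟩ _ ⟨r', w', a', hw', rfl⟩
    simp [hfg r r' w w' a a' hw hw']
  exact sub_eq_zero.mp hsub

theorem nbeta_tmul (b : N →ₗ[k] N →ₗ[k] k) (r r' : MvPolynomial (Fin n) k) (w w' : Lam k n)
    (a a' : N) :
    nbeta N b ((r ⊗ₜ[k] w) ⊗ₜ[k] a) ((r' ⊗ₜ[k] w') ⊗ₜ[k] a') =
      b a a' • ((r' * r) ⊗ₜ[k] (w' * w)) := by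
  rw [← Algebra.TensorProduct.tmul_mul_tmul]
  rfl

theorem nbeta_swap {b : N →ₗ[k] N →ₗ[k] k} {ε : k} (hsymm : ∀ a a' : N, b a a' = ε * b a' a)
    {i j : ℕ} {t t' : S k n ⊗[k] N} (ht : t ∈ nielsenModule k n N i)
    (ht' : t' ∈ nielsenModule k n N j) :
    nbeta N b t t' = (ε * (-1 : k) ^ (i * j)) • nbeta N b t' t := by
  refine eqOn_nielsenModule₂ (f := nbeta N b) (g := (ε * (-1 : k) ^ (i * j)) • (nbeta N b).flip)
    (fun r r' w w' a a' hw hw' => ?_) ht ht'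
  have hcomm : w' * w = (-1 : k) ^ (i * j) • (w * w') := by
    rw [mul_comm i, exteriorPower_graded_mul_comm hw' hw]
  simp only [LinearMap.smul_apply, LinearMap.flip_apply, nbeta_tmul]
  rw [hcomm, hsymm, mul_comm r', tmul_smul, smul_smul, smul_smul]
  congr 1
  ring

end NielsenModule

section NielsenDifferential

variable {M}

theorem nphi_tmul (r : MvPolynomial (Fin n) k) (w : Lam k n) (a : M) :
    nphi M ((r ⊗ₜ[k] w) ⊗ₜ[k] a) =
      ∑ l : Fin n, (((X l * r) ⊗ₜ[k] contr l w) ⊗ₜ[k] a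
        - (r ⊗ₜ[k] contr l w) ⊗ₜ[k] ((X l : MvPolynomial (Fin n) k) • a)) := by
  simp [nphi, nphiA, nphiB, smulX, tmul_neg, sub_eq_add_neg, Finset.sum_add_distrib]

theorem nphi_mem_nielsenModule {i : ℕ} {t : S k n ⊗[k] M}
    (ht : t ∈ nielsenModule k n M (i + 1)) : nphi M t ∈ nielsenModule k n M i := by
  suffices nielsenModule k n M (i + 1) ≤
      (nielsenModule k n M i).comap (nphi (k := k) (n := n) M) from this ht
  refine Submodule.span_le.mpr ?_
  rintro _ ⟨r, w, a, hw, rfl⟩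
  have hcontr (l : Fin n) : contr l w ∈ lamPow k n i := contractLeft_mem_ι_range_pow _ hw
  rw [SetLike.mem_coe, Submodule.mem_comap, nphi_tmul]
  refine sum_mem fun l _ => ?_
  rw [sub_eq_add_neg, ← tmul_neg]
  exact add_mem (tmul_mem_nielsenModule _ (hcontr l) _) (tmul_mem_nielsenModule _ (hcontr l) _)

theorem nbeta_nphi_right_eq_smul_nbeta_nphi_left {b : M →ₗ[k] M →ₗ[k] k}
    (hbal : ∀ (l : Fin n) (a a' : M),
      b ((X l : MvPolynomial (Fin n) k) • a) a' = b a ((X l : MvPolynomial (Fin n) k) • a'))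
    {i j : ℕ} (hij : n ≤ i + j + 1) {t t' : S k n ⊗[k] M}
    (ht : t ∈ nielsenModule k n M (i + 1)) (ht' : t' ∈ nielsenModule k n M (j + 1)) :
    nbeta M b t (nphi M t') = (-1 : k) ^ j • nbeta M b (nphi M t) t' := by
  suffices (nbeta M b).compl₂ (nphi M) t t' = ((-1 : k) ^ j • nbeta M b ∘ₗ nphi M) t t' by
    simpa only [LinearMap.compl₂_apply, LinearMap.smul_apply, LinearMap.comp_apply] using this
  refine eqOn_nielsenModule₂ (fun r r' w w' a a' hw hw' => ?_) ht ht'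
  have hcontr (l : Fin n) : contr l w' * w = (-1 : k) ^ j • (w' * contr l w) :=
    contractLeft_mul_eq_smul_mul_contractLeft _ (by rw [Module.finrank_fin_fun]; omega) hw' hw
  simp only [LinearMap.compl₂_apply, LinearMap.smul_apply, LinearMap.comp_apply, nphi_tmul,
    map_sum, map_sub, LinearMap.sum_apply, LinearMap.sub_apply, nbeta_tmul, Finset.smul_sum]
  refine Finset.sum_congr rfl fun l _ => ?_
  rw [hcontr, hbal, smul_sub, tmul_smul, tmul_smul, smul_comm (b a a'), smul_comm (b a _),
    mul_left_comm, mul_assoc]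

/-- For `n = i + j + 1` this pairs `φ : A_{i+1} → A_i` with `φ : A_{j+1} → A_j`, the middle map
being the case `i = j`; for smaller `n` all the pairings vanish. -/
theorem middle_map_selfdual_general {i j : ℕ} (hij : n ≤ i + j + 1) (b : M →ₗ[k] M →ₗ[k] k) (ε : k)
    (hsymm : ∀ a a' : M, b a a' = ε * b a' a)
    (hbal : ∀ (l : Fin n) (a a' : M),
      b ((X l : MvPolynomial (Fin n) k) • a) a' = b a ((X l : MvPolynomial (Fin n) k) • a')) :
    (∀ t ∈ nielsenModule k n M (i + 1), ∀ t' ∈ nielsenModule k n M (j + 1),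
      nbeta M b t (nphi M t') = (-1 : k) ^ j • nbeta M b (nphi M t) t') ∧
    (∀ t ∈ nielsenModule k n M (i + 1), ∀ t' ∈ nielsenModule k n M (j + 1),
      nbeta M b t (nphi M t') =
        (ε * (-1 : k) ^ (j + i * (j + 1))) • nbeta M b t' (nphi M t)) := by
  refine ⟨fun t ht t' ht' => nbeta_nphi_right_eq_smul_nbeta_nphi_left hbal hij ht ht',
    fun t ht t' ht' => ?_⟩
  rw [nbeta_nphi_right_eq_smul_nbeta_nphi_left hbal hij ht ht',
    nbeta_swap hsymm (nphi_mem_nielsenModule ht) ht', smul_smul, pow_add, mul_left_comm]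

end NielsenDifferential

/-- Let `n = 2m+1` be odd and let `M` be a finite length Gorenstein
module, with (±)-symmetric nondegenerate pairing `b(m)(m') = τ(m)(m')` compatible
with the `R`-action.  Then on elements of exterior degree `m+1` one has
`φ^∨_{m+1} ∘ β_{m+1} = (-1)^m β_m ∘ φ_{m+1}`, i.e.
`β(t)(φ t'') = (-1)^m • β(φ t)(t'')`; consequently the middle pairing
`(t, t'') ↦ β(t)(φ t'')` is symmetric for `m` even and skew-symmetric for `m` odd
(up to the sign `ε` of the pairing). -/
theorem middle_map_selfdual
    [FiniteDimensional k M]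
    (m : ℕ) (hn : n = 2 * m + 1)
    (b : M →ₗ[k] M →ₗ[k] k)
    (ε : k) (hε : ε = 1 ∨ ε = -1)
    (hsymm : ∀ a a' : M, b a a' = ε * b a' a)
    (hnd : ∀ a : M, (∀ a' : M, b a a' = 0) → a = 0)
    (hbal : ∀ (l : Fin n) (a a' : M),
      b ((X l : MvPolynomial (Fin n) k) • a) a' = b a ((X l : MvPolynomial (Fin n) k) • a')) :
    (∀ (r r'' : MvPolynomial (Fin n) k) (w w'' : Lam k n) (a a'' : M),
      w ∈ lamPow k n (m + 1) → w'' ∈ lamPow k n (m + 1) →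
        nbeta M b ((r ⊗ₜ[k] w) ⊗ₜ[k] a) (nphi M ((r'' ⊗ₜ[k] w'') ⊗ₜ[k] a'')) =
          ((-1 : k) ^ m) •
            nbeta M b (nphi M ((r ⊗ₜ[k] w) ⊗ₜ[k] a)) ((r'' ⊗ₜ[k] w'') ⊗ₜ[k] a'')) ∧
    (∀ (r r'' : MvPolynomial (Fin n) k) (w w'' : Lam k n) (a a'' : M),
      w ∈ lamPow k n (m + 1) → w'' ∈ lamPow k n (m + 1) →
        nbeta M b ((r ⊗ₜ[k] w) ⊗ₜ[k] a) (nphi M ((r'' ⊗ₜ[k] w'') ⊗ₜ[k] a'')) =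
          (ε * (-1 : k) ^ m) •
            nbeta M b ((r'' ⊗ₜ[k] w'') ⊗ₜ[k] a'') (nphi M ((r ⊗ₜ[k] w) ⊗ₜ[k] a))) := by
  have hsign : (-1 : k) ^ (m + m * (m + 1)) = (-1) ^ m := by
    rw [pow_add, (Nat.even_mul_succ_self m).neg_one_pow, mul_one]
  obtain ⟨hadj, hswap⟩ :=
    middle_map_selfdual_general (i := m) (j := m) (by omega) b ε hsymm hbal
  rw [hsign] at hswap
  exact ⟨fun r r'' _ _ a a'' hw hw'' => hadj _ (tmul_mem_nielsenModule r hw a) _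
      (tmul_mem_nielsenModule r'' hw'' a''),
    fun r r'' _ _ a a'' hw hw'' => hswap _ (tmul_mem_nielsenModule r hw a) _
      (tmul_mem_nielsenModule r'' hw'' a'')⟩

end
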